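/- Let n ≥ 2, let λ ∈ ℂ with λ ∉ ℝ_{≥0} (λ is not a nonnegative real number), and let N, P ≥ 0 be such that β_c := max{2 − 2P, (4 − 2N)/3} < 1. Then there exist constants C, c > 0, complex-valued potentials V : ℝⁿ → ℂ and W : ℝⁿ → ℂⁿ exactly one of which is identically zero, and a nonzero twice continuously differentiable function u : ℝⁿ → ℂ, such that −Δu + W·∇u + Vu = λu in ℝⁿ, |V(x)| ≤ C⟨x⟩^{−N} and |W(x)| ≤ C⟨x⟩^{−P} for all x ∈ ℝⁿ, and there exists A ∈ {−1, 0} such that |u(x)| ≤ C·exp(−c·|x|·(log|x|)^{A}) for all x with |x| ≥ 2. -/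

import Mathlib

noncomputable section

/-- Partial derivative of `u` in the `i`-th coordinate direction. -/
def pd {d : ℕ} (u : EuclideanSpace ℝ (Fin d) → ℂ) (i : Fin d)
    (x : EuclideanSpace ℝ (Fin d)) : ℂ :=
  fderiv ℝ u x (EuclideanSpace.single i 1)

/-- Laplacian on ℝᵈ: sum of second partial derivatives. -/
def lap {d : ℕ} (u : EuclideanSpace ℝ (Fin d) → ℂ) (x : EuclideanSpace ℝ (Fin d)) : ℂ :=
  ∑ i, pd (fun y => pd u i y) i x

open Polynomial in
/-- The polynomial in `t = 1/⟨x⟩` giving the potential. -/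
def Rp (lam b : ℂ) (q : ℂ[X]) : ℂ[X] :=
  C lam + (q ^ 2 - X ^ 2 * derivative q) * (1 - X ^ 2) + q * (C (b - 1) * X + X ^ 3)

open Polynomial in
theorem Rp_step (lam b k a : ℂ) (q S : ℂ[X]) (m : ℕ) (hq : q.eval 0 = -k)
    (hS : Rp lam b q = X ^ (m + 1) * S) :
    ∃ T : ℂ[X], Rp lam b (q + C a * X ^ (m + 1)) = X ^ (m + 1) * T ∧
      T.eval 0 = S.eval 0 - 2 * k * a := by
  refine ⟨S + (2 * q * C a + C a ^ 2 * X ^ (m + 1) - C a * C ((m : ℂ) + 1) * X) * (1 - X ^ 2)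
      + C a * (C (b - 1) * X + X ^ 3), ?_, ?_⟩
  · have : Rp lam b (q + C a * X ^ (m + 1)) = Rp lam b q +
      X ^ (m + 1) * ((2 * q * C a + C a ^ 2 * X ^ (m + 1) - C a * C ((m : ℂ) + 1) * X) * (1 - X ^ 2)
      + C a * (C (b - 1) * X + X ^ 3)) := by
      simp only [Rp, derivative_add, derivative_C_mul, derivative_X_pow]
      simp
      ring
    rw [this, hS]; ring
  · simp [hq]; ring

open Polynomial in
theorem exists_q (lam b k : ℂ) (hk : k ≠ 0) (hkl : k ^ 2 = -lam) (m : ℕ) :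
    ∃ q S : ℂ[X], q.eval 0 = -k ∧ Rp lam b q = X ^ (m + 1) * S := by
  induction m with
  | zero =>
    refine ⟨C (-k), C (-k) ^ 2 * (-X) + C (-k) * (C (b - 1) + X ^ 2), by simp, ?_⟩
    have : (C lam : ℂ[X]) = - C k ^ 2 := by rw [← C_pow, hkl]; simp
    simp only [Rp, this, derivative_C]
    simp
    ring
  | succ m ih =>
    obtain ⟨q, S, hq, hS⟩ := ih
    obtain ⟨T, hT, hT0⟩ := Rp_step lam b k (S.eval 0 / (2 * k)) q S m hq hS
    have : T.eval 0 = 0 := by rw [hT0]; field_simp; ring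
    obtain ⟨T', hT'⟩ : X ∣ T := by rwa [X_dvd_iff, coeff_zero_eq_eval_zero]
    refine ⟨q + C (S.eval 0 / (2 * k)) * X ^ (m + 1), T', by simp [hq], ?_⟩
    rw [hT, hT']; ring

open Polynomial in
theorem exists_q' (lam b k : ℂ) (hk : k ≠ 0) (hkl : k ^ 2 = -lam) (m : ℕ) :
    ∃ q1 S : ℂ[X], (C (-k) + X * q1).eval 1 = 0 ∧
      Rp lam b (C (-k) + X * q1) = X ^ (m + 1) * S := by
  obtain ⟨q, S, hq, hS⟩ := exists_q lam b k hk hkl m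
  obtain ⟨T, hT, -⟩ := Rp_step lam b k (-q.eval 1) q S m hq hS
  obtain ⟨q1, h1⟩ : X ∣ (q + C (-q.eval 1) * X ^ (m + 1)) - C (-k) := by
    rw [X_dvd_iff, coeff_zero_eq_eval_zero]; simp [hq]
  have h2 : C (-k) + X * q1 = q + C (-q.eval 1) * X ^ (m + 1) := by rw [← h1]; ring
  refine ⟨q1, T, ?_, ?_⟩
  · rw [h2]; simp
  · rw [h2, hT]

theorem poly_bound (q : Polynomial ℂ) :
    ∃ M : ℝ, 0 < M ∧ ∀ t : ℝ, 0 ≤ t → t ≤ 1 → ‖q.eval (t : ℂ)‖ ≤ M := by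
  have hc : ContinuousOn (fun t : ℝ => q.eval (t : ℂ)) (Set.Icc 0 1) := by fun_prop
  obtain ⟨M, hM⟩ := isCompact_Icc.exists_bound_of_continuousOn hc
  exact ⟨max M 1, by positivity, fun t h0 h1 => (hM t ⟨h0, h1⟩).trans (le_max_left _ _)⟩

/-- the phase -/
def phs (k : ℂ) (q1 : Polynomial ℂ) (r : ℝ) : ℂ :=
  -k * r + ∫ s in (1 : ℝ)..r, q1.eval ((s⁻¹ : ℝ) : ℂ) * ((s⁻¹ : ℝ) : ℂ)

theorem integrand_cont (q1 : Polynomial ℂ) :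
    ContinuousOn (fun s : ℝ => q1.eval ((s⁻¹ : ℝ) : ℂ) * ((s⁻¹ : ℝ) : ℂ)) (Set.Ioi 0) := by
  have h1 : ContinuousOn (fun s : ℝ => ((s⁻¹ : ℝ) : ℂ)) (Set.Ioi 0) :=
    Complex.continuous_ofReal.comp_continuousOn
      (continuousOn_inv₀.mono (fun s hs => ne_of_gt hs))
  exact (q1.continuous.comp_continuousOn h1).mul h1

theorem phs_deriv (k : ℂ) (q1 : Polynomial ℂ) (r : ℝ) (hr : 0 < r) :
    HasDerivAt (phs k q1)
      ((Polynomial.C (-k) + Polynomial.X * q1).eval ((r⁻¹ : ℝ) : ℂ)) r := by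
  have hc := integrand_cont q1
  have hI : HasDerivAt (fun r : ℝ => ∫ s in (1 : ℝ)..r,
      q1.eval ((s⁻¹ : ℝ) : ℂ) * ((s⁻¹ : ℝ) : ℂ)) (q1.eval ((r⁻¹ : ℝ) : ℂ) * ((r⁻¹ : ℝ) : ℂ)) r := by
    apply intervalIntegral.integral_hasDerivAt_right
    · apply ContinuousOn.intervalIntegrable
      apply hc.mono
      intro s hs
      rw [Set.mem_uIcc] at hs
      rcases hs with hs | hs
      · exact lt_of_lt_of_le one_pos hs.1
      · exact lt_of_lt_of_le hr hs.1
    · exact hc.stronglyMeasurableAtFilter isOpen_Ioi r hr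
    · exact hc.continuousAt (Ioi_mem_nhds hr)
  have h2 : HasDerivAt (fun r : ℝ => -k * (r : ℂ)) (-k) r := by
    simpa using (Complex.ofRealCLM.hasDerivAt (x := r)).const_mul (-k)
  have h3 := h2.add hI
  refine HasDerivAt.congr_deriv h3 ?_
  simp [mul_comm]

theorem phs_bound (k : ℂ) (hk : 0 < k.re) (q1 : Polynomial ℂ) :
    ∃ K : ℝ, ∀ r : ℝ, 1 ≤ r → (phs k q1 r).re ≤ K - k.re / 2 * r := by
  obtain ⟨M, hM0, hM⟩ := poly_bound q1
  refine ⟨-(M * Real.log (k.re / (2 * M))), fun r hr => ?_⟩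
  have hr0 : 0 < r := by linarith
  have h1 : ‖∫ s in (1 : ℝ)..r, q1.eval ((s⁻¹ : ℝ) : ℂ) * ((s⁻¹ : ℝ) : ℂ)‖
      ≤ ∫ s in (1 : ℝ)..r, M * s⁻¹ := by
    apply intervalIntegral.norm_integral_le_of_norm_le hr
    · refine Filter.Eventually.of_forall (fun s hs => ?_)
      have hs1 : 1 < s := hs.1
      have hs0 : 0 < s := by linarith
      have hi : 0 ≤ s⁻¹ := by positivity
      rw [norm_mul, Complex.norm_real, Real.norm_of_nonneg hi]
      exact mul_le_mul_of_nonneg_right (hM _ hi (inv_le_one_of_one_le₀ hs1.le)) hi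
    · apply ContinuousOn.intervalIntegrable
      apply ContinuousOn.const_smul (c := M)
      apply continuousOn_inv₀.mono
      intro s hs
      rw [Set.uIcc_of_le hr] at hs
      exact ne_of_gt (lt_of_lt_of_le one_pos hs.1)
  rw [intervalIntegral.integral_const_mul, integral_inv_of_pos one_pos hr0, div_one] at h1
  have h2 := (Complex.re_le_norm _).trans h1
  have h3 : Real.log (k.re / (2 * M) * r) ≤ k.re / (2 * M) * r :=
    (Real.log_le_sub_one_of_pos (by positivity)).trans (by linarith)
  rw [Real.log_mul (by positivity) (by positivity)] at h3
  have h4 := mul_le_mul_of_nonneg_left h3 hM0.le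
  have h5 : M * (k.re / (2 * M) * r) = k.re / 2 * r := by field_simp
  have h6 : (phs k q1 r).re = -k.re * r + (∫ s in (1 : ℝ)..r,
      q1.eval ((s⁻¹ : ℝ) : ℂ) * ((s⁻¹ : ℝ) : ℂ)).re := by
    rw [phs]; simp
  rw [h6]
  linarith

section geom
variable {d : ℕ}

/-- Japanese bracket. -/
def jb (x : EuclideanSpace ℝ (Fin d)) : ℝ := Real.sqrt (1 + ‖x‖ ^ 2)

theorem jb_sq (x : EuclideanSpace ℝ (Fin d)) : jb x ^ 2 = 1 + ‖x‖ ^ 2 :=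
  Real.sq_sqrt (by positivity)

theorem jb_pos (x : EuclideanSpace ℝ (Fin d)) : 0 < jb x := Real.sqrt_pos.2 (by positivity)

theorem one_le_jb (x : EuclideanSpace ℝ (Fin d)) : 1 ≤ jb x := by
  rw [jb, Real.one_le_sqrt]; nlinarith [sq_nonneg ‖x‖]

theorem norm_le_jb (x : EuclideanSpace ℝ (Fin d)) : ‖x‖ ≤ jb x := by
  apply Real.le_sqrt_of_sq_le; linarith

theorem jb_deriv (x : EuclideanSpace ℝ (Fin d)) :
    HasFDerivAt (jb (d := d)) ((jb x)⁻¹ • innerSL ℝ x) x := by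
  have h1 : HasFDerivAt (fun y : EuclideanSpace ℝ (Fin d) => 1 + ‖y‖ ^ 2) (2 • innerSL ℝ x) x :=
    (hasStrictFDerivAt_norm_sq x).hasFDerivAt.const_add 1
  have h2 := h1.sqrt (by positivity)
  refine HasFDerivAt.congr_fderiv h2 ?_
  ext y
  simp [jb]
  field_simp

theorem jb_contDiff : ContDiff ℝ 2 (jb (d := d)) := by
  apply ContDiff.sqrt
  · exact contDiff_const.add (contDiff_norm_sq ℝ)
  · intro x; positivity

theorem jbi_deriv (x : EuclideanSpace ℝ (Fin d)) :
    HasFDerivAt (fun y => (jb (d := d) y)⁻¹) (-((jb x)⁻¹ ^ 3) • innerSL ℝ x) x := by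
  have h := (hasDerivAt_inv (jb_pos x).ne').comp_hasFDerivAt x (jb_deriv x)
  refine HasFDerivAt.congr_fderiv h ?_
  rw [smul_smul]
  congr 1
  have := (jb_pos x).ne'
  field_simp

/-- The solution. -/
def sol (k : ℂ) (q1 : Polynomial ℂ) (x : EuclideanSpace ℝ (Fin d)) : ℂ :=
  Complex.exp (phs k q1 (jb x))

/-- Radial factor of the gradient. -/
def hfac (k : ℂ) (q1 : Polynomial ℂ) (x : EuclideanSpace ℝ (Fin d)) : ℂ :=
  (Polynomial.X * (Polynomial.C (-k) + Polynomial.X * q1)).eval (((jb x)⁻¹ : ℝ) : ℂ)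

theorem polyjb_deriv (p : Polynomial ℂ) (x : EuclideanSpace ℝ (Fin d)) :
    HasFDerivAt (fun y : EuclideanSpace ℝ (Fin d) => p.eval (((jb y)⁻¹ : ℝ) : ℂ))
      ((innerSL ℝ x).smulRight
        (-((((jb x)⁻¹ : ℝ) : ℂ) ^ 3) * p.derivative.eval (((jb x)⁻¹ : ℝ) : ℂ))) x := by
  have h1 : HasDerivAt (fun t : ℝ => p.eval (t : ℂ))
      (p.derivative.eval (((jb x)⁻¹ : ℝ) : ℂ)) (jb x)⁻¹ :=
    (p.hasDerivAt (((jb x)⁻¹ : ℝ) : ℂ)).comp_ofReal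
  have h2 := h1.hasFDerivAt.comp x (jbi_deriv x)
  refine HasFDerivAt.congr_fderiv h2 ?_
  ext y
  simp
  ring

theorem sol_deriv (k : ℂ) (q1 : Polynomial ℂ) (x : EuclideanSpace ℝ (Fin d)) :
    HasFDerivAt (sol (d := d) k q1)
      ((innerSL ℝ x).smulRight (sol k q1 x * hfac k q1 x)) x := by
  have h1 := (phs_deriv k q1 (jb x) (jb_pos x)).hasFDerivAt.comp x (jb_deriv x)
  have h2 := h1.cexp
  refine HasFDerivAt.congr_fderiv h2 ?_
  ext y
  simp [sol, hfac]
  ring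

theorem hfac_contDiff (k : ℂ) (q1 : Polynomial ℂ) : ContDiff ℝ 2 (hfac (d := d) k q1) := by
  have h1 : ContDiff ℝ 2 (fun x : EuclideanSpace ℝ (Fin d) => (((jb x)⁻¹ : ℝ) : ℂ)) :=
    Complex.ofRealCLM.contDiff.comp (jb_contDiff.inv (fun x => (jb_pos x).ne'))
  have h2 : ∀ p : Polynomial ℂ, ContDiff ℝ 2
      (fun x : EuclideanSpace ℝ (Fin d) => p.eval (((jb x)⁻¹ : ℝ) : ℂ)) := by
    intro p
    induction p using Polynomial.induction_on' with
    | add p q hp hq => simpa using hp.add hq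
    | monomial n a => simpa using contDiff_const.mul (h1.pow n)
  exact h2 _

theorem sol_contDiff (k : ℂ) (q1 : Polynomial ℂ) : ContDiff ℝ 2 (sol (d := d) k q1) := by
  have hdiff : Differentiable ℝ (sol (d := d) k q1) :=
    fun x => (sol_deriv k q1 x).differentiableAt
  have hfd : fderiv ℝ (sol (d := d) k q1) =
      fun x => (innerSL ℝ x).smulRight (sol k q1 x * hfac k q1 x) :=
    funext fun x => (sol_deriv k q1 x).fderiv
  have key : ∀ n : ℕ, n ≤ 1 → ContDiff ℝ n (sol (d := d) k q1) →
      ContDiff ℝ (n + 1) (sol (d := d) k q1) := by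
    intro n hn h
    rw [contDiff_succ_iff_fderiv]
    refine ⟨hdiff, by simp, ?_⟩
    rw [hfd]
    have hh : ContDiff ℝ n (hfac (d := d) k q1) :=
      (hfac_contDiff k q1).of_le (by exact_mod_cast (by omega : n ≤ 2))
    exact (innerSL ℝ).contDiff.smulRight (h.mul hh)
  have h0 : ContDiff ℝ (0 : ℕ) (sol (d := d) k q1) := by
    simpa [contDiff_zero] using hdiff.continuous
  have h1 := key 0 (by norm_num) h0
  have h2 := key 1 le_rfl (by simpa using h1)
  norm_num at h2
  exact h2

theorem pd_sol (k : ℂ) (q1 : Polynomial ℂ) (i : Fin d) (x : EuclideanSpace ℝ (Fin d)) :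
    pd (sol k q1) i x = sol k q1 x * hfac k q1 x * ((x i : ℝ) : ℂ) := by
  rw [pd, (sol_deriv k q1 x).fderiv]
  simp [EuclideanSpace.inner_single_right, mul_comm]

theorem pd_pd_sol (k : ℂ) (q1 : Polynomial ℂ) (i : Fin d) (x : EuclideanSpace ℝ (Fin d)) :
    pd (fun y => pd (sol k q1) i y) i x = sol k q1 x * (hfac k q1 x + ((x i : ℝ) : ℂ) ^ 2 *
      (hfac k q1 x ^ 2 - (((jb x)⁻¹ : ℝ) : ℂ) ^ 3 *
        (Polynomial.X * (Polynomial.C (-k) + Polynomial.X * q1)).derivative.eval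
          (((jb x)⁻¹ : ℝ) : ℂ))) := by
  have e : (fun y => pd (sol k q1) i y) =
      fun y : EuclideanSpace ℝ (Fin d) => sol k q1 y * hfac k q1 y * ((y i : ℝ) : ℂ) :=
    funext fun y => pd_sol k q1 i y
  rw [e, pd]
  have h1 := sol_deriv k q1 x
  have h2 : HasFDerivAt (hfac (d := d) k q1) _ x := polyjb_deriv _ x
  have h3 : HasFDerivAt (fun y : EuclideanSpace ℝ (Fin d) => ((y i : ℝ) : ℂ))
      (Complex.ofRealCLM.comp (EuclideanSpace.proj (𝕜 := ℝ) i)) x :=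
    (Complex.ofRealCLM.comp (EuclideanSpace.proj (𝕜 := ℝ) i)).hasFDerivAt
  have h4 := (h1.mul h2).mul h3
  have h5 := h4.fderiv
  have h6 := congrArg (fun L => L (EuclideanSpace.single i (1 : ℝ))) h5
  refine Eq.trans h6 ?_
  simp [EuclideanSpace.inner_single_right, -Polynomial.derivative_mul]
  ring

theorem lap_sol (lam k : ℂ) (q1 : Polynomial ℂ) (x : EuclideanSpace ℝ (Fin d)) :
    lap (sol k q1) x = sol k q1 x *
      ((Rp lam d (Polynomial.C (-k) + Polynomial.X * q1)).eval (((jb x)⁻¹ : ℝ) : ℂ) - lam) := by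
  rw [lap]
  simp_rw [pd_pd_sol]
  rw [← Finset.mul_sum, Finset.sum_add_distrib, ← Finset.sum_mul]
  have hs : ∑ i, ((x i : ℝ) : ℂ) ^ 2 = ((jb x : ℝ) : ℂ) ^ 2 - 1 := by
    have h1 : ∑ i, (x i) ^ 2 = jb x ^ 2 - 1 := by
      rw [jb_sq, EuclideanSpace.real_norm_sq_eq]; ring
    exact_mod_cast congrArg (fun r : ℝ => (r : ℂ)) h1
  rw [hs]
  have hj : ((jb x : ℝ) : ℂ) ≠ 0 := by exact_mod_cast (jb_pos x).ne'
  congr 1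
  rw [hfac]
  generalize Polynomial.C (-k) + Polynomial.X * q1 = q at *
  simp only [Rp, Polynomial.derivative_mul, Polynomial.derivative_X]
  simp
  field_simp
  ring

end geom
theorem exists_k (lam : ℂ) (hlam : ∀ t : ℝ, 0 ≤ t → lam ≠ (t : ℂ)) :
    ∃ k : ℂ, k ^ 2 = -lam ∧ 0 < k.re := by
  obtain ⟨k, hk⟩ : ∃ k : ℂ, k ^ 2 = -lam := IsAlgClosed.exists_pow_nat_eq _ two_pos
  have hre : k.re ≠ 0 := by
    intro h0
    apply hlam (k.im ^ 2) (sq_nonneg _)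
    have h1 : k = k.im * Complex.I := by
      apply Complex.ext <;> simp [h0]
    have h2 : lam = -k ^ 2 := by rw [hk]; ring
    rw [h2]
    nth_rewrite 1 [h1]
    rw [mul_pow, Complex.I_sq]
    push_cast
    ring
  rcases lt_or_gt_of_ne hre with h | h
  · exact ⟨-k, by rw [neg_sq, hk], by simpa using h⟩
  · exact ⟨k, hk, h⟩

theorem stmt10 (d : ℕ) (hd : 2 ≤ d) (lam : ℂ) (hlam : ∀ t : ℝ, 0 ≤ t → lam ≠ (t : ℂ))
    (N P : ℝ) (hN : 0 ≤ N) (hP : 0 ≤ P)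
    (hβ : max (2 - 2 * P) ((4 - 2 * N) / 3) < 1) :
    ∃ (C c : ℝ) (V : EuclideanSpace ℝ (Fin d) → ℂ)
      (W : EuclideanSpace ℝ (Fin d) → EuclideanSpace ℂ (Fin d))
      (u : EuclideanSpace ℝ (Fin d) → ℂ),
      0 < C ∧ 0 < c ∧
      ((V = 0 ∧ W ≠ 0) ∨ (V ≠ 0 ∧ W = 0)) ∧
      u ≠ 0 ∧ ContDiff ℝ 2 u ∧
      (∀ x, -lap u x + (∑ i, W x i * pd u i x) + V x * u x = lam * u x) ∧
      (∀ x, ‖V x‖ ≤ C * Real.sqrt (1 + ‖x‖ ^ 2) ^ (-N)) ∧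
      (∀ x, ‖W x‖ ≤ C * Real.sqrt (1 + ‖x‖ ^ 2) ^ (-P)) ∧
      (∃ A : ℝ, (A = -1 ∨ A = 0) ∧
        ∀ x : EuclideanSpace ℝ (Fin d), 2 ≤ ‖x‖ →
          ‖u x‖ ≤ C * Real.exp (-(c * ‖x‖ * Real.log ‖x‖ ^ A))) := by
  obtain ⟨k, hk2, hkre⟩ := exists_k lam hlam
  have hk0 : k ≠ 0 := by rintro rfl; simp at hkre
  have hlam0 : lam ≠ 0 := by simpa using hlam 0 le_rfl
  obtain ⟨m, hm⟩ := exists_nat_ge N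
  obtain ⟨q1, S, hq1, hS⟩ := exists_q' lam d k hk0 hk2 m
  obtain ⟨M, hM0, hM⟩ := poly_bound S
  obtain ⟨K, hK⟩ := phs_bound k hkre q1
  have hC : 0 < max M (Real.exp K) := lt_of_lt_of_le hM0 (le_max_left _ _)
  refine ⟨max M (Real.exp K), k.re / 2,
    fun x => (Rp lam d (Polynomial.C (-k) + Polynomial.X * q1)).eval (((jb x)⁻¹ : ℝ) : ℂ),
    0, sol k q1, hC, by positivity, Or.inr ⟨?_, rfl⟩, ?_, sol_contDiff k q1, ?_, ?_, ?_,
    0, Or.inr rfl, ?_⟩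
  · intro h
    have h0 := congrFun h 0
    have hj : jb (0 : EuclideanSpace ℝ (Fin d)) = 1 := by simp [jb]
    have e : (Rp lam d (Polynomial.C (-k) + Polynomial.X * q1)).eval 1 = lam := by
      generalize Polynomial.C (-k) + Polynomial.X * q1 = q at *
      simp [Rp, hq1]
    simp only [hj, inv_one, Complex.ofReal_one, e] at h0
    exact hlam0 h0
  · intro h
    exact Complex.exp_ne_zero _ (congrFun h 0)
  · intro x
    rw [lap_sol lam]
    simp
    ring
  · intro x
    have ht0 : 0 < (jb x)⁻¹ := inv_pos.2 (jb_pos x)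
    have ht1 : (jb x)⁻¹ ≤ 1 := inv_le_one_of_one_le₀ (one_le_jb x)
    change ‖Polynomial.eval _ _‖ ≤ _ * jb x ^ (-N)
    rw [hS, Polynomial.eval_mul, Polynomial.eval_pow, Polynomial.eval_X, norm_mul, norm_pow,
      Complex.norm_real, Real.norm_of_nonneg ht0.le, mul_comm]
    have h2 : (jb x)⁻¹ ^ (m + 1) ≤ jb x ^ (-N) := by
      rw [← Real.rpow_natCast, Real.inv_rpow (jb_pos x).le, ← Real.rpow_neg (jb_pos x).le]
      apply Real.rpow_le_rpow_of_exponent_le (one_le_jb x)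
      push_cast
      linarith
    exact mul_le_mul ((hM _ ht0.le ht1).trans (le_max_left _ _)) h2 (by positivity) hC.le
  · intro x
    simp only [Pi.zero_apply, norm_zero]
    positivity
  · intro x hx
    rw [Real.rpow_zero, mul_one, sol, Complex.norm_exp]
    calc Real.exp (phs k q1 (jb x)).re ≤ Real.exp (K - k.re / 2 * ‖x‖) := by
          apply Real.exp_le_exp.2
          have h1 := hK _ (one_le_jb x)
          have h2 := mul_le_mul_of_nonneg_left (norm_le_jb x) (by positivity : 0 ≤ k.re / 2)
          linarith
      _ = Real.exp K * Real.exp (-(k.re / 2 * ‖x‖)) := by rw [← Real.exp_add]; ring_nf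
      _ ≤ _ := by gcongr; exact le_max_right _ _
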